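/- The following identity of absolutely convergent lattice sums holds: ∑'_{(m,k)} [ (m² − 15k²)/(m² + 15k²)³ + (5k² − 3m²)/(3m² + 5k²)³ ] = ∑'_{(m,k)} [ (1/2)(2m² + 2mk − 7k²)/(m² + mk + 4k²)³ + (1/2)(m² + 8mk + k²)/(2m² + mk + 2k²)³ ]. -/

import Mathlib

/-!
Write `S(Λ)` for the sum of `Re (z²) / |z|⁶` over the nonzero points of a lattice `Λ` in `ℂ`, and
let `u = (√5 + i√3) / 2`, so that `uū = 2` and `u² = ω = (1 + √-15) / 2`. The right-hand side is
`S(Λ₁) + S(Λ₂)` for `Λ₁ = ℤ + ℤω` and `Λ₂ = ℤu + ℤū`, and the left-hand side is the same with `Λ₁`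
and `Λ₂` replaced by their sublattices `ℤ + ℤ√-15` and `ℤ√-3 + ℤ√5` of index two.

The other two sublattices of index two of `Λ₁` are conjugate to each other and equal `uΛ₂` and
`ūΛ₂`. Since `Re (u²z²) + Re (ū²z²) = 2 Re (u²) Re (z²) = Re (z²)`, each contributes `S(Λ₂) / 16`.
The same holds with `Λ₁` and `Λ₂` exchanged. A nonzero class of `Λᵢ / 2Λᵢ` lies in exactly one of
the three sublattices of index two, and the zero class in all three, so that the sums over these
add up to `S(Λᵢ) + 2 S(2Λᵢ) = (9/8) S(Λᵢ)`. Hence the left-hand side is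
`(9/8 - 2/16) (S(Λ₁) + S(Λ₂))`.
-/

open Complex ComplexConjugate

section Reindex

variable {α β M : Type*} [AddCommMonoid M] [TopologicalSpace M]

lemma tsum_comp_eq_tsum_indicator {g : α → β} (hg : g.Injective) {s : Set β}
    (hs : ∀ b, (∃ a, g a = b) ↔ b ∈ s) (f : β → M) :
    ∑' a, f (g a) = ∑' b, s.indicator f b := by
  obtain rfl : Set.range g = s := Set.ext hs
  rw [← tsum_subtype, tsum_range f hg]

lemma tsum_two_mul_fst_eq_tsum_indicator (f : ℤ × ℤ → M) :
    ∑' p : ℤ × ℤ, f (2 * p.1, p.2) = ∑' q, {q : ℤ × ℤ | Even q.1}.indicator f q :=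
  tsum_comp_eq_tsum_indicator (g := fun p : ℤ × ℤ ↦ (2 * p.1, p.2)) (fun p q h ↦ by grind)
    (by simp [even_iff_exists_two_mul, eq_comm]) f

lemma tsum_two_mul_snd_eq_tsum_indicator (f : ℤ × ℤ → M) :
    ∑' p : ℤ × ℤ, f (p.1, 2 * p.2) = ∑' q, {q : ℤ × ℤ | Even q.2}.indicator f q :=
  tsum_comp_eq_tsum_indicator (g := fun p : ℤ × ℤ ↦ (p.1, 2 * p.2)) (fun p q h ↦ by grind)
    (by simp [even_iff_exists_two_mul, eq_comm]) f

lemma tsum_two_mul_eq_tsum_indicator (f : ℤ × ℤ → M) :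
    ∑' p : ℤ × ℤ, f (2 * p.1, 2 * p.2) =
      ∑' q, {q : ℤ × ℤ | Even q.1 ∧ Even q.2}.indicator f q :=
  tsum_comp_eq_tsum_indicator (g := fun p : ℤ × ℤ ↦ (2 * p.1, 2 * p.2)) (fun p q h ↦ by grind)
    (by simp [even_iff_exists_two_mul, eq_comm]) f

lemma tsum_add_sub_eq_tsum_indicator (f : ℤ × ℤ → M) :
    ∑' p : ℤ × ℤ, f (p.1 + p.2, p.1 - p.2) =
      ∑' q, {q : ℤ × ℤ | Even (q.1 + q.2)}.indicator f q := by
  refine tsum_comp_eq_tsum_indicator (g := fun p : ℤ × ℤ ↦ (p.1 + p.2, p.1 - p.2))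
    (fun p q h ↦ by grind) (fun q ↦ ⟨?_, ?_⟩) f
  · rintro ⟨p, rfl⟩
    exact ⟨p.1, by ring⟩
  · rintro ⟨x, hx⟩
    exact ⟨(x, q.1 - x), by ext <;> grind⟩

end Reindex

lemma tsum_index_two_sublattices {E : Type*} [AddCommGroup E] [UniformSpace E]
    [IsUniformAddGroup E] [CompleteSpace E] [T2Space E] {f : ℤ × ℤ → E} (hf : Summable f) :
    ∑' p : ℤ × ℤ, f (2 * p.1, p.2) + ∑' p : ℤ × ℤ, f (p.1, 2 * p.2) +
        ∑' p : ℤ × ℤ, f (p.1 + p.2, p.1 - p.2) =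
      ∑' p, f p + 2 • ∑' p : ℤ × ℤ, f (2 * p.1, 2 * p.2) := by
  rw [tsum_two_mul_fst_eq_tsum_indicator, tsum_two_mul_snd_eq_tsum_indicator,
    tsum_add_sub_eq_tsum_indicator, tsum_two_mul_eq_tsum_indicator,
    ← (hf.indicator _).tsum_add (hf.indicator _),
    ← ((hf.indicator _).add (hf.indicator _)).tsum_add (hf.indicator _),
    ← (hf.indicator _).tsum_const_smul, ← hf.tsum_add ((hf.indicator _).const_smul 2)]
  refine tsum_congr fun q ↦ ?_
  by_cases h₁ : Even q.1 <;> by_cases h₂ : Even q.2 <;>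
    simp [h₁, h₂, Int.even_add, two_nsmul, add_assoc]

lemma tsum_ne_zero_eq_tsum {α M : Type*} [Zero α] [AddCommMonoid M] [TopologicalSpace M]
    {f : α → M} (hf : f 0 = 0) : ∑' x : {x : α // x ≠ 0}, f x = ∑' x, f x := by
  refine tsum_subtype_eq_of_support_subset (s := {x : α | x ≠ 0}) ?_
  rintro x hx rfl
  exact hx hf

lemma linearIndependent_pair_of_im_ne_zero {a b : ℂ} (h : (conj a * b).im ≠ 0) :
    LinearIndependent ℝ ![a, b] := by
  refine LinearIndependent.pair_iff.mpr fun s t hst ↦ ?_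
  have hre := congrArg re hst
  have him := congrArg im hst
  simp only [real_smul, add_re, re_ofReal_mul, add_im, im_ofReal_mul, zero_re, zero_im] at hre him
  rw [mul_im, conj_re, conj_im] at h
  constructor
  · refine (mul_eq_zero.mp ?_).resolve_right h
    linear_combination b.im * hre - b.re * him
  · refine (mul_eq_zero.mp ?_).resolve_right h
    linear_combination a.re * him - a.im * hre

lemma summable_norm_int_mul_add_int_mul_zpow {a b : ℂ} (h : (conj a * b).im ≠ 0) {n : ℤ}
    (hn : n < -2) :
    Summable fun p : ℤ × ℤ ↦ ‖p.1 * a + p.2 * b‖ ^ n := by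
  let L : PeriodPair := ⟨a, b, linearIndependent_pair_of_im_ne_zero h⟩
  have hL : Summable fun z : L.lattice ↦ ‖z‖ ^ n :=
    ZLattice.summable_norm_zpow L.lattice n (by simpa using hn)
  refine (L.latticeEquivProd.symm.toEquiv.summable_iff.mpr hL).congr fun p ↦ ?_
  simp [L, ← L.latticeEquiv_symm_apply]

/-- The function `z ↦ Re (z²) / |z|⁶`, of which all four families of terms in the theorem are
values at lattice points. Division by zero makes it vanish at `0`. -/
noncomputable def reSqKernel (z : ℂ) : ℝ := (z ^ 2).re / normSq z ^ 3

lemma reSqKernel_eq (z : ℂ) :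
    reSqKernel z = (z.re ^ 2 - z.im ^ 2) / (z.re ^ 2 + z.im ^ 2) ^ 3 := by
  rw [reSqKernel, normSq_apply]
  congr 2 <;> simp [pow_two]

@[simp] lemma reSqKernel_zero : reSqKernel 0 = 0 := by simp [reSqKernel]

@[simp] lemma reSqKernel_conj (z : ℂ) : reSqKernel (conj z) = reSqKernel z := by
  simp [reSqKernel_eq]

lemma reSqKernel_two_mul (z : ℂ) : reSqKernel (2 * z) = reSqKernel z / 16 := by
  simp only [reSqKernel, mul_pow, normSq_mul, normSq_ofNat]
  norm_num
  ring

lemma reSqKernel_mul_add_conj_mul (u z : ℂ) :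
    reSqKernel (u * z) + reSqKernel (conj u * z) = 2 * reSqKernel u * reSqKernel z := by
  simp only [reSqKernel, normSq_mul, normSq_conj, mul_pow]
  simp [pow_two]
  ring

lemma abs_reSqKernel_le (z : ℂ) : |reSqKernel z| ≤ ‖z‖ ^ (-4 : ℤ) := by
  rcases eq_or_ne z 0 with rfl | hz
  · simp
  calc |reSqKernel z| ≤ ‖z‖ ^ 2 / (‖z‖ ^ 2) ^ 3 := by
        rw [reSqKernel, abs_div, abs_pow, normSq_eq_norm_sq, abs_of_nonneg (sq_nonneg ‖z‖)]
        gcongr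
        exact (abs_re_le_norm _).trans_eq (norm_pow z 2)
    _ = ‖z‖ ^ (-4 : ℤ) := by
        rw [zpow_neg]
        field_simp

lemma summable_reSqKernel_mul {a b : ℂ} (h : (conj a * b).im ≠ 0) (u : ℂ) :
    Summable fun p : ℤ × ℤ ↦ reSqKernel (u * (p.1 * a + p.2 * b)) := by
  have hbound := summable_norm_int_mul_add_int_mul_zpow h (n := -4) (by norm_num)
  refine .of_norm_bounded (hbound.mul_left (‖u‖ ^ (-4 : ℤ))) fun p ↦ ?_
  rw [← mul_zpow, ← norm_mul]
  exact abs_reSqKernel_le _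

lemma summable_reSqKernel {a b : ℂ} (h : (conj a * b).im ≠ 0) :
    Summable fun p : ℤ × ℤ ↦ reSqKernel (p.1 * a + p.2 * b) := by
  simpa using summable_reSqKernel_mul h 1

/-- The sum of `reSqKernel` over the lattice `ℤa + ℤb`, parametrised by the coordinates in the
basis `a, b`. -/
noncomputable def latticeSum (a b : ℂ) : ℝ := ∑' p : ℤ × ℤ, reSqKernel (p.1 * a + p.2 * b)

lemma latticeSum_comm (a b : ℂ) : latticeSum a b = latticeSum b a := by
  rw [latticeSum, ← (Equiv.prodComm ℤ ℤ).tsum_eq]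
  exact tsum_congr fun p ↦ by simp [add_comm]

lemma latticeSum_neg_left (a b : ℂ) : latticeSum (-a) b = latticeSum a b := by
  rw [latticeSum, ← ((Equiv.neg ℤ).prodCongr (Equiv.refl ℤ)).tsum_eq]
  exact tsum_congr fun p ↦ by simp

lemma latticeSum_sub_left (a b : ℂ) : latticeSum (a - b) b = latticeSum a b := by
  rw [latticeSum, latticeSum,
    ← ((Equiv.refl ℤ).prodShear Equiv.subRight).tsum_eq fun p ↦ reSqKernel (p.1 * a + p.2 * b)]
  refine tsum_congr fun p ↦ congrArg reSqKernel ?_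
  simp
  ring

lemma latticeSum_conj (a b : ℂ) : latticeSum (conj a) (conj b) = latticeSum a b :=
  tsum_congr fun p ↦ by rw [← reSqKernel_conj]; simp

lemma latticeSum_two_mul (a b : ℂ) : latticeSum (2 * a) (2 * b) = latticeSum a b / 16 := by
  rw [latticeSum, latticeSum, ← tsum_div_const]
  refine tsum_congr fun p ↦ ?_
  rw [← reSqKernel_two_mul]
  ring_nf

lemma latticeSum_mul_add_conj_mul {a b : ℂ} (h : (conj a * b).im ≠ 0) (u : ℂ) :
    latticeSum (u * a) (u * b) + latticeSum (conj u * a) (conj u * b) =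
      2 * reSqKernel u * latticeSum a b := by
  have hmul (v : ℂ) : latticeSum (v * a) (v * b) =
      ∑' p : ℤ × ℤ, reSqKernel (v * (p.1 * a + p.2 * b)) :=
    tsum_congr fun p ↦ by ring_nf
  rw [hmul, hmul, ← (summable_reSqKernel_mul h u).tsum_add (summable_reSqKernel_mul h (conj u)),
    latticeSum, ← tsum_mul_left]
  exact tsum_congr fun p ↦ reSqKernel_mul_add_conj_mul _ _

lemma latticeSum_mul_of_conj {a b : ℂ} (h : (conj a * b).im ≠ 0) {u : ℂ}
    (hu : latticeSum (u * conj a) (u * conj b) = latticeSum (u * a) (u * b)) :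
    latticeSum (u * a) (u * b) = reSqKernel u * latticeSum a b := by
  have hconj : latticeSum (conj u * a) (conj u * b) = latticeSum (u * a) (u * b) := by
    rw [← hu, ← latticeSum_conj]
    simp
  linarith [latticeSum_mul_add_conj_mul h u]

lemma latticeSum_index_two_sublattices {a b : ℂ} (h : (conj a * b).im ≠ 0) :
    latticeSum (2 * a) b + latticeSum a (2 * b) + latticeSum (a + b) (a - b) =
      9 / 8 * latticeSum a b := by
  calc _ = latticeSum a b + 2 • latticeSum (2 * a) (2 * b) := by
        convert! tsum_index_two_sublattices (summable_reSqKernel h) using 3 <;>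
          exact tsum_congr fun p ↦ by push_cast; ring_nf
    _ = 9 / 8 * latticeSum a b := by
        rw [latticeSum_two_mul]
        ring

lemma tsum_ne_zero_reSqKernel_add {a b c d : ℂ} (hab : (conj a * b).im ≠ 0)
    (hcd : (conj c * d).im ≠ 0) :
    ∑' p : {p : ℤ × ℤ // p ≠ 0},
        (reSqKernel (p.1.1 * a + p.1.2 * b) + reSqKernel (p.1.1 * c + p.1.2 * d)) =
      latticeSum a b + latticeSum c d := by
  rw [latticeSum, latticeSum, ← (summable_reSqKernel hab).tsum_add (summable_reSqKernel hcd)]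
  exact tsum_ne_zero_eq_tsum (f := fun p : ℤ × ℤ ↦
    reSqKernel (p.1 * a + p.2 * b) + reSqKernel (p.1 * c + p.2 * d)) (by simp)

/-- The square root `(√5 + i√3) / 2` of `ω = (1 + √-15) / 2`. The form `m² + mk + 4k²` is the norm
form of `ℤ + ℤω`, and `2m² + mk + 2k²` that of `ℤu + ℤū` for `u = sqrtOmega`. -/
noncomputable def sqrtOmega : ℂ := ⟨√5 / 2, √3 / 2⟩

local notation "u" => sqrtOmega

lemma sqrtOmega_mul_conj : u * conj u = 2 := by
  norm_num [mul_conj, normSq_apply, sqrtOmega, div_mul_div_comm]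

lemma sqrtOmega_sq : u ^ 2 = ⟨1 / 2, √3 * √5 / 2⟩ := by
  apply Complex.ext
  · norm_num [sqrtOmega, pow_two, div_mul_div_comm]
  · simp only [sqrtOmega, pow_two, mul_im]
    ring

lemma sqrtOmega_conj_sq : conj u ^ 2 = 1 - u ^ 2 := by
  rw [← map_pow, sqrtOmega_sq]
  apply Complex.ext <;> norm_num

lemma sqrtOmega_sq_im_ne_zero : (u ^ 2).im ≠ 0 := by
  simp [sqrtOmega_sq]

lemma conj_sqrtOmega_mul_conj_im_ne_zero : (conj u * conj u).im ≠ 0 := by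
  simpa [← pow_two, ← map_pow] using sqrtOmega_sq_im_ne_zero

lemma reSqKernel_sqrtOmega : reSqKernel u = 1 / 16 := by
  rw [reSqKernel_eq]
  norm_num [sqrtOmega, div_pow]

lemma reSqKernel_mul_one_add_mul_sqrtOmega_sq (m k : ℤ) :
    reSqKernel (m * 1 + k * u ^ 2) =
      (1 / 2) * (2 * (m : ℝ) ^ 2 + 2 * (m : ℝ) * (k : ℝ) - 7 * (k : ℝ) ^ 2) /
        ((m : ℝ) ^ 2 + (m : ℝ) * (k : ℝ) + 4 * (k : ℝ) ^ 2) ^ 3 := by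
  have hz : m * 1 + k * u ^ 2 = ⟨m + k / 2, √3 * √5 * k / 2⟩ := by
    apply Complex.ext <;> simp [sqrtOmega_sq] <;> ring
  rw [hz, reSqKernel_eq]
  congr 2 <;> norm_num [mul_pow, div_pow] <;> ring

lemma reSqKernel_mul_sqrtOmega_add_mul_conj (m k : ℤ) :
    reSqKernel (m * u + k * conj u) =
      (1 / 2) * ((m : ℝ) ^ 2 + 8 * (m : ℝ) * (k : ℝ) + (k : ℝ) ^ 2) /
        (2 * (m : ℝ) ^ 2 + (m : ℝ) * (k : ℝ) + 2 * (k : ℝ) ^ 2) ^ 3 := by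
  have hz : m * u + k * conj u = ⟨√5 * (m + k) / 2, √3 * (m - k) / 2⟩ := by
    apply Complex.ext <;> simp [sqrtOmega] <;> ring
  rw [hz, reSqKernel_eq]
  congr 2 <;> norm_num [mul_pow, div_pow] <;> ring

lemma reSqKernel_mul_one_add_mul_sq_sub_conj_sq (m k : ℤ) :
    reSqKernel (m * 1 + k * (u ^ 2 - conj u ^ 2)) =
      ((m : ℝ) ^ 2 - 15 * (k : ℝ) ^ 2) / ((m : ℝ) ^ 2 + 15 * (k : ℝ) ^ 2) ^ 3 := by
  have hz : m * 1 + k * (u ^ 2 - conj u ^ 2) = ⟨m, √3 * √5 * k⟩ := by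
    rw [← map_pow, sqrtOmega_sq]
    apply Complex.ext <;> simp
    ring
  rw [hz, reSqKernel_eq]
  congr 2 <;> norm_num [mul_pow]

lemma reSqKernel_mul_sub_conj_add_mul_add_conj (m k : ℤ) :
    reSqKernel (m * (u - conj u) + k * (u + conj u)) =
      (5 * (k : ℝ) ^ 2 - 3 * (m : ℝ) ^ 2) / (3 * (m : ℝ) ^ 2 + 5 * (k : ℝ) ^ 2) ^ 3 := by
  have hz : m * (u - conj u) + k * (u + conj u) = ⟨√5 * k, √3 * m⟩ := by
    apply Complex.ext <;> simp [sqrtOmega] <;> ring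
  rw [hz, reSqKernel_eq]
  congr 2 <;> norm_num [mul_pow, add_comm]

lemma latticeSum_two_sqrtOmega_sq : latticeSum 2 (u ^ 2) = latticeSum u (conj u) / 16 := by
  calc latticeSum 2 (u ^ 2) = latticeSum (u * u) (u * conj u) := by
        rw [latticeSum_comm, sqrtOmega_mul_conj, pow_two]
    _ = reSqKernel u * latticeSum u (conj u) :=
        latticeSum_mul_of_conj conj_sqrtOmega_mul_conj_im_ne_zero
          (by rw [conj_conj, latticeSum_comm])
    _ = latticeSum u (conj u) / 16 := by
        rw [reSqKernel_sqrtOmega]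
        ring

lemma latticeSum_two_mul_sqrtOmega_conj :
    latticeSum (2 * u) (conj u) = latticeSum 1 (u ^ 2) / 16 := by
  have him : (conj (u ^ 2) * 1).im ≠ 0 := by
    rw [mul_one, conj_im]
    exact neg_ne_zero.mpr sqrtOmega_sq_im_ne_zero
  have hconj : latticeSum (u * conj (u ^ 2)) (u * conj 1) = latticeSum (u * u ^ 2) (u * 1) := by
    rw [map_one, map_pow, sqrtOmega_conj_sq, ← latticeSum_sub_left (u * u ^ 2),
      ← latticeSum_neg_left (u * u ^ 2 - _)]
    ring_nf
  calc latticeSum (2 * u) (conj u) = latticeSum (2 * conj u) u := by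
        simp [← latticeSum_conj (2 * u), map_ofNat]
    _ = latticeSum (u * conj (u ^ 2)) (u * conj 1) := by
        rw [← sqrtOmega_mul_conj, map_one, map_pow]
        ring_nf
    _ = reSqKernel u * latticeSum (u ^ 2) 1 := by
        rw [hconj, latticeSum_mul_of_conj him hconj]
    _ = latticeSum 1 (u ^ 2) / 16 := by
        rw [reSqKernel_sqrtOmega, latticeSum_comm]
        ring

lemma latticeSum_one_sqrtOmega_sq_sub_conj_sq :
    latticeSum 1 (u ^ 2 - conj u ^ 2) =
      9 / 8 * latticeSum 1 (u ^ 2) - 1 / 8 * latticeSum u (conj u) := by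
  have hthird : latticeSum (1 + u ^ 2) (1 - u ^ 2) = latticeSum 2 (u ^ 2) := by
    calc _ = latticeSum (2 - conj u ^ 2) (conj u ^ 2) := by
          rw [sqrtOmega_conj_sq]
          ring_nf
      _ = latticeSum 2 (u ^ 2) := by
          simp [latticeSum_sub_left, ← latticeSum_conj 2 (u ^ 2), map_ofNat]
  have hshear : latticeSum 1 (2 * u ^ 2) = latticeSum 1 (u ^ 2 - conj u ^ 2) := by
    rw [latticeSum_comm, ← latticeSum_sub_left, latticeSum_comm, sqrtOmega_conj_sq]
    ring_nf
  have hindex := latticeSum_index_two_sublattices (a := 1) (b := u ^ 2)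
    (by simpa using sqrtOmega_sq_im_ne_zero)
  rw [mul_one, hthird, hshear, latticeSum_two_sqrtOmega_sq] at hindex
  linarith

lemma latticeSum_sqrtOmega_sub_conj_add_conj :
    latticeSum (u - conj u) (u + conj u) =
      9 / 8 * latticeSum u (conj u) - 1 / 8 * latticeSum 1 (u ^ 2) := by
  have hconj : latticeSum u (2 * conj u) = latticeSum (2 * u) (conj u) := by
    simp [latticeSum_comm u, ← latticeSum_conj (2 * u), map_ofNat]
  have hindex := latticeSum_index_two_sublattices conj_sqrtOmega_mul_conj_im_ne_zero
  rw [hconj, latticeSum_two_mul_sqrtOmega_conj, latticeSum_comm (u + conj u)] at hindex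
  linarith

/-- Proposition 2 of the paper: an identity between two lattice sums over
`(m,k) ∈ ℤ² ∖ {(0,0)}`. -/
theorem lattice_sum_identity :
    (∑' p : {p : ℤ × ℤ // p ≠ 0},
        (((p.1.1 : ℝ) ^ 2 - 15 * (p.1.2 : ℝ) ^ 2) /
            ((p.1.1 : ℝ) ^ 2 + 15 * (p.1.2 : ℝ) ^ 2) ^ 3 +
          (5 * (p.1.2 : ℝ) ^ 2 - 3 * (p.1.1 : ℝ) ^ 2) /
            (3 * (p.1.1 : ℝ) ^ 2 + 5 * (p.1.2 : ℝ) ^ 2) ^ 3)) =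
      ∑' p : {p : ℤ × ℤ // p ≠ 0},
        ((1 / 2) * (2 * (p.1.1 : ℝ) ^ 2 + 2 * (p.1.1 : ℝ) * (p.1.2 : ℝ) -
              7 * (p.1.2 : ℝ) ^ 2) /
            ((p.1.1 : ℝ) ^ 2 + (p.1.1 : ℝ) * (p.1.2 : ℝ) + 4 * (p.1.2 : ℝ) ^ 2) ^ 3 +
          (1 / 2) * ((p.1.1 : ℝ) ^ 2 + 8 * (p.1.1 : ℝ) * (p.1.2 : ℝ) + (p.1.2 : ℝ) ^ 2) /
            (2 * (p.1.1 : ℝ) ^ 2 + (p.1.1 : ℝ) * (p.1.2 : ℝ) + 2 * (p.1.2 : ℝ) ^ 2) ^ 3) := by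
  simp_rw [← reSqKernel_mul_one_add_mul_sq_sub_conj_sq, ← reSqKernel_mul_sub_conj_add_mul_add_conj,
    ← reSqKernel_mul_one_add_mul_sqrtOmega_sq, ← reSqKernel_mul_sqrtOmega_add_mul_conj]
  calc _ = latticeSum 1 (u ^ 2 - conj u ^ 2) + latticeSum (u - conj u) (u + conj u) :=
        tsum_ne_zero_reSqKernel_add (by simp [← map_pow, sqrtOmega_sq])
          (by simp [sqrtOmega, ← neg_add'])
    _ = latticeSum 1 (u ^ 2) + latticeSum u (conj u) := by
        rw [latticeSum_one_sqrtOmega_sq_sub_conj_sq, latticeSum_sqrtOmega_sub_conj_add_conj]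
        ring
    _ = _ := (tsum_ne_zero_reSqKernel_add (by simpa using sqrtOmega_sq_im_ne_zero)
          conj_sqrtOmega_mul_conj_im_ne_zero).symm
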